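/- Let n, N be positive integers, T ≥ 0, and let s_1,…,s_N : [0,T] → ℝ be scalar scheduling signals such that for every t ∈ [0,T] at least one s_i(t) is nonzero, and such that ŝ := inf_{t∈[0,T]} Σ_{i=1}^N s_i(t)² > 0. Let u_c : [0,T] → ℝⁿ and for each i let y_i : [0,T] → ℝⁿ satisfy ∫₀ᵀ s_i(t) u_c(t)ᵀ y_i(t) dt ≥ β_i + δ_i ∫₀ᵀ s_i(t)² ‖u_c(t)‖² dt with β_i ≤ 0 and δ_i > 0 (all integrands assumed integrable). Then with y_c(t) = Σ_{i=1}^N s_i(t) y_i(t) one has ∫₀ᵀ u_c(t)ᵀ y_c(t) dt ≥ Σ_i β_i + δ_min ŝ ∫₀ᵀ ‖u_c(t)‖² dt, where δ_min = min_i δ_i. (This is the scalar-scheduling special case Φ_i(t) = s_i(t)·I, α_i = 1 of matrix gain-scheduling, recovering the scalar gain-scheduling ISP result.) -/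

import Mathlib

open MeasureTheory Matrix

/-!
Since each `sᵢ` is scalar, `⟪u_c, Σᵢ sᵢ yᵢ⟫ = Σᵢ ⟪sᵢ u_c, yᵢ⟫`: the power supplied to the
gain-scheduled system is the total power supplied to its subsystems, so their dissipation
inequalities add up. The dissipated term is then at least `δ_min ∫ Σᵢ sᵢ² ‖u_c‖²`, and `ŝ` bounds
`Σᵢ sᵢ²` from below.
-/

section ISP

variable {Ω E ι : Type*} [MeasurableSpace Ω] [AddCommGroup E] [Module ℝ E]
  {B : LinearMap.BilinForm ℝ E} {μ : Measure Ω}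

/-- The input–output pair of signals `(u, y)` satisfies the input-strict-passivity inequality
`⟨u, y⟩ ≥ β + δ ‖u‖²` with bias `β` and gain `δ`. The pointwise product of signals is a bilinear
form `B`, and `μ` is the measure on time, so that truncation to `[0, T]` is a restriction of `μ`.
Both integrals are required to converge. -/
structure IsISP (B : LinearMap.BilinForm ℝ E) (μ : Measure Ω) (u y : Ω → E) (β δ : ℝ) : Prop where
  integrable_input : Integrable (fun t => B (u t) (u t)) μ
  integrable_supply : Integrable (fun t => B (u t) (y t)) μ
  le_integral_supply : β + δ * ∫ t, B (u t) (u t) ∂μ ≤ ∫ t, B (u t) (y t) ∂μ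

theorem isISP_smul_iff {s : Ω → ℝ} {u y : Ω → E} {β δ : ℝ} :
    IsISP B μ (fun t => s t • u t) y β δ ↔
      Integrable (fun t => s t ^ 2 * B (u t) (u t)) μ ∧
      Integrable (fun t => s t * B (u t) (y t)) μ ∧
      β + δ * ∫ t, s t ^ 2 * B (u t) (u t) ∂μ ≤ ∫ t, s t * B (u t) (y t) ∂μ := by
  have input_eq : ∀ t, B (s t • u t) (s t • u t) = s t ^ 2 * B (u t) (u t) := fun t => by
    simp only [map_smul, LinearMap.smul_apply, smul_eq_mul]; ring
  have supply_eq : ∀ t, B (s t • u t) (y t) = s t * B (u t) (y t) := fun t => by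
    simp only [map_smul, LinearMap.smul_apply, smul_eq_mul]
  simp only [← input_eq, ← supply_eq]
  exact ⟨fun h => ⟨h.1, h.2, h.3⟩, fun h => ⟨h.1, h.2.1, h.2.2⟩⟩

namespace IsISP

theorem of_gain_le {u y : Ω → E} {β δ δ' : ℝ} (h : IsISP B μ u y β δ) (hB : B.IsNonneg)
    (hδ : δ' ≤ δ) : IsISP B μ u y β δ' where
  integrable_input := h.integrable_input
  integrable_supply := h.integrable_supply
  le_integral_supply := by
    have input_nonneg : 0 ≤ ∫ t, B (u t) (u t) ∂μ := integral_nonneg fun t => hB.nonneg (u t)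
    exact le_trans (by gcongr) h.le_integral_supply

theorem of_sum [Fintype ι] {F : ι → Type*} [∀ i, AddCommGroup (F i)] [∀ i, Module ℝ (F i)]
    {C : ∀ i, LinearMap.BilinForm ℝ (F i)} {v w : ∀ i, Ω → F i} {u y : Ω → E} {β : ι → ℝ} {c d : ℝ}
    (h : ∀ i, IsISP (C i) μ (v i) (w i) (β i) d) (hd : 0 ≤ d)
    (hu : Integrable (fun t => B (u t) (u t)) μ)
    (hinput : ∀ᵐ t ∂μ, c * B (u t) (u t) ≤ ∑ i, C i (v i t) (v i t))
    (hsupply : ∀ᵐ t ∂μ, B (u t) (y t) = ∑ i, C i (v i t) (w i t)) :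
    IsISP B μ u y (∑ i, β i) (d * c) where
  integrable_input := hu
  integrable_supply :=
    (integrable_congr hsupply).2 (integrable_finsetSum _ fun i _ => (h i).integrable_supply)
  le_integral_supply := by
    have input_le : c * ∫ t, B (u t) (u t) ∂μ ≤ ∑ i, ∫ t, C i (v i t) (v i t) ∂μ := by
      rw [← integral_const_mul, ← integral_finsetSum _ fun i _ => (h i).integrable_input]
      exact integral_mono_ae (hu.const_mul c)
        (integrable_finsetSum _ fun i _ => (h i).integrable_input) hinput
    calc ∑ i, β i + d * c * ∫ t, B (u t) (u t) ∂μ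
        ≤ ∑ i, β i + d * ∑ i, ∫ t, C i (v i t) (v i t) ∂μ := by rw [mul_assoc]; gcongr
      _ = ∑ i, (β i + d * ∫ t, C i (v i t) (v i t) ∂μ) := by
        rw [Finset.sum_add_distrib, Finset.mul_sum]
      _ ≤ ∑ i, ∫ t, C i (v i t) (w i t) ∂μ :=
        Finset.sum_le_sum fun i _ => (h i).le_integral_supply
      _ = ∫ t, ∑ i, C i (v i t) (w i t) ∂μ :=
        (integral_finsetSum _ fun i _ => (h i).integrable_supply).symm
      _ = ∫ t, B (u t) (y t) ∂μ := (integral_congr_ae hsupply).symm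

end IsISP

theorem scalar_gain_scheduled_ISP_general [Fintype ι] (hB : B.IsNonneg) {s : ι → Ω → ℝ}
    {u : Ω → E} {y : ι → Ω → E} {β δ : ι → ℝ} {c d : ℝ}
    (hc : ∀ᵐ t ∂μ, c ≤ ∑ i, s i t ^ 2) (hd : 0 ≤ d) (hδ : ∀ i, d ≤ δ i)
    (hu : Integrable (fun t => B (u t) (u t)) μ)
    (h : ∀ i, IsISP B μ (fun t => s i t • u t) (y i) (β i) (δ i)) :
    IsISP B μ u (fun t => ∑ i, s i t • y i t) (∑ i, β i) (d * c) := by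
  refine IsISP.of_sum (fun i => (h i).of_gain_le hB (hδ i)) hd hu ?_ (.of_forall fun t => ?_)
  · filter_upwards [hc] with t ht
    calc c * B (u t) (u t)
        ≤ (∑ i, s i t ^ 2) * B (u t) (u t) := mul_le_mul_of_nonneg_right ht (hB.nonneg (u t))
      _ = ∑ i, B (s i t • u t) (s i t • u t) := by
        simp only [Finset.sum_mul, map_smul, LinearMap.smul_apply, smul_eq_mul, pow_two, mul_assoc]
  · simp only [map_sum, map_smul, LinearMap.smul_apply]

end ISP

theorem isNonneg_dotProductBilin (m R : Type*) [Fintype m] [CommRing R] [LinearOrder R]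
    [IsStrictOrderedRing R] :
    LinearMap.BilinForm.IsNonneg (dotProductBilin R R : LinearMap.BilinForm R (m → R)) :=
  ⟨fun x => Finset.sum_nonneg fun i _ => mul_self_nonneg (x i)⟩

theorem iInf_sum_sq_le {α ι : Type*} [Fintype ι] (s : ι → α → ℝ) {A : Set α} {a : α} (ha : a ∈ A) :
    ⨅ t : A, ∑ i, s i t ^ 2 ≤ ∑ i, s i a ^ 2 :=
  ciInf_le (f := fun t : A => ∑ i, s i t ^ 2)
    ⟨0, Set.forall_mem_range.2 fun _ => Finset.sum_nonneg fun _ _ => sq_nonneg _⟩ ⟨a, ha⟩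

/-- **Scalar gain-scheduling ISP result** (the special case `Φᵢ(t) = sᵢ(t)·I`, `αᵢ = 1`
of matrix gain-scheduling): with `y_c(t) = Σᵢ sᵢ(t) yᵢ(t)`,
`⟨u_c, y_c⟩_T ≥ Σᵢ βᵢ + δ_min ŝ ‖u_c‖²_{2T}` where `δ_min = minᵢ δᵢ`. -/
theorem scalar_gain_scheduled_ISP
    (n N : ℕ) (hn : 0 < n) (hN : 0 < N) (T : ℝ) (hT : 0 ≤ T)
    (s : Fin N → ℝ → ℝ)
    -- at every time at least one scheduling signal is nonzero
    (hactive : ∀ t ∈ Set.Icc (0 : ℝ) T, ∃ i : Fin N, s i t ≠ 0)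
    -- ŝ := inf over [0,T] of Σᵢ sᵢ(t)² is strictly positive
    (shat : ℝ)
    (hshat : shat = ⨅ t : Set.Icc (0 : ℝ) T, ∑ i : Fin N, s i (t : ℝ) ^ 2)
    (hshatpos : 0 < shat)
    (uc : ℝ → Fin n → ℝ) (y : Fin N → ℝ → Fin n → ℝ)
    (β δ : Fin N → ℝ) (hβ : ∀ i, β i ≤ 0) (hδ : ∀ i, 0 < δ i)
    -- integrability of all integrands on [0, T]
    (hint₁ : ∀ i, IntervalIntegrable (fun t => s i t * (uc t ⬝ᵥ y i t)) volume 0 T)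
    (hint₂ : ∀ i, IntervalIntegrable (fun t => s i t ^ 2 * (uc t ⬝ᵥ uc t)) volume 0 T)
    (hint₃ : IntervalIntegrable (fun t => uc t ⬝ᵥ uc t) volume 0 T)
    (hint₄ : IntervalIntegrable
      (fun t => uc t ⬝ᵥ (∑ i : Fin N, s i t • y i t)) volume 0 T)
    -- each subsystem satisfies the ISP inequality with input `uᵢ = sᵢ u_c`
    (hISP : ∀ i, (∫ t in (0:ℝ)..T, s i t * (uc t ⬝ᵥ y i t))
      ≥ β i + δ i * ∫ t in (0:ℝ)..T, s i t ^ 2 * (uc t ⬝ᵥ uc t)) :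
    (∫ t in (0:ℝ)..T, uc t ⬝ᵥ (∑ i : Fin N, s i t • y i t))
      ≥ (∑ i : Fin N, β i)
        + (⨅ i : Fin N, δ i) * shat * ∫ t in (0:ℝ)..T, uc t ⬝ᵥ uc t := by
  have hs : ∀ᵐ t ∂volume.restrict (Set.Ioc 0 T), shat ≤ ∑ i, s i t ^ 2 :=
    ae_restrict_of_forall_mem measurableSet_Ioc fun t ht =>
      hshat ▸ iInf_sum_sq_le s (Set.Ioc_subset_Icc_self ht)
  simp only [intervalIntegral.integral_of_le hT, intervalIntegrable_iff_integrableOn_Ioc_of_le hT]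
    at hint₁ hint₂ hint₃ hISP ⊢
  exact (scalar_gain_scheduled_ISP_general (isNonneg_dotProductBilin (Fin n) ℝ) hs
    (Real.iInf_nonneg fun i => (hδ i).le) (ciInf_le (Set.finite_range δ).bddBelow) hint₃
    fun i => isISP_smul_iff.2 ⟨hint₂ i, hint₁ i, hISP i⟩).le_integral_supply
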